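/- arXiv:2201.03923 — 6 statements merged into one kernel-verified Lean document; each statement's English description precedes it below -/
import Mathlib

section
/- Let X be a real vector space equipped with a norm ‖·‖_s and a seminorm ‖·‖_w satisfying ‖f‖_w ≤ ‖f‖_s for all f ∈ X. Let L₁, L₂ : X → X be linear maps and suppose there are constants A, B ≥ 0 and λ ∈ (0,1) with Aλ + B ≥ 1 such that for i = 1, 2, all n ≥ 1 and all f ∈ X one has the Lasota–Yorke inequality ‖L_iⁿ f‖_s ≤ A λⁿ ‖f‖_s + B ‖f‖_w. Set C* = Aλ + B. If h₁, h₂ ∈ X satisfy L₁h₁ = h₁ and L₂h₂ = h₂, then for every integer N ≥ 1: ‖h₁ − h₂‖_s ≤ ‖L₁^N (h₁ − h₂)‖_s + N · C* · ‖(L₁ − L₂) h₂‖_s. -/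
/-!
Write `d = h₁ - h₂` and `g = (L₁ - L₂) h₂`. The fixed-point equations give `d = L₁ d + g`, hence
`L₁ⁿ d = L₁ⁿ⁺¹ d + L₁ⁿ g` for every `n`. By the Lasota–Yorke inequality and `λⁿ ≤ λ`, `nw ≤ ns`,
each error term satisfies `ns (L₁ⁿ g) ≤ (A λ + B) ns g` for `n ≥ 1`; for `n = 0` this is
`1 ≤ A λ + B`. Summing over `n < N` gives the claim.
-/

/-- Lemma 3.2 (first part): two operators with a shared Lasota–Yorke inequality;
the distance between their fixed points is controlled by `L₁^N (h₁ - h₂)` plus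
`N · C* · ‖(L₁ - L₂) h₂‖_s`, where `C* = A·λ + B`. -/
theorem stmt0 {X : Type*} [AddCommGroup X] [Module ℝ X]
    (ns nw : X → ℝ)
    (hns_eq_zero : ∀ f : X, ns f = 0 ↔ f = 0)
    (hns_add : ∀ f g : X, ns (f + g) ≤ ns f + ns g)
    (hns_smul : ∀ (c : ℝ) (f : X), ns (c • f) = |c| * ns f)
    (hnw_add : ∀ f g : X, nw (f + g) ≤ nw f + nw g)
    (hnw_smul : ∀ (c : ℝ) (f : X), nw (c • f) = |c| * nw f)
    (hwle : ∀ f : X, nw f ≤ ns f)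
    (L₁ L₂ : X →ₗ[ℝ] X)
    (A B lam : ℝ) (hA : 0 ≤ A) (hB : 0 ≤ B) (hlam : lam ∈ Set.Ioo (0:ℝ) 1)
    (hC : 1 ≤ A * lam + B)
    (hLY : ∀ L : X →ₗ[ℝ] X, L = L₁ ∨ L = L₂ → ∀ n : ℕ, 1 ≤ n → ∀ f : X,
      ns ((L ^ n) f) ≤ A * lam ^ n * ns f + B * nw f)
    (h₁ h₂ : X) (hh₁ : L₁ h₁ = h₁) (hh₂ : L₂ h₂ = h₂)
    (N : ℕ) (hN : 1 ≤ N) :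
    ns (h₁ - h₂) ≤ ns ((L₁ ^ N) (h₁ - h₂)) + N * (A * lam + B) * ns ((L₁ - L₂) h₂) := by
  have ns_nonneg : ∀ f : X, 0 ≤ ns f := by
    intro f
    have h := hns_add f ((-1 : ℝ) • f)
    have h0 : f + (-1 : ℝ) • f = 0 := by simp
    rw [h0, (hns_eq_zero 0).2 rfl, hns_smul] at h
    norm_num at h
    linarith
  have hbound : ∀ (n : ℕ) (f : X), ns ((L₁ ^ n) f) ≤ (A * lam + B) * ns f := by
    intro n f
    rcases Nat.eq_zero_or_pos n with rfl | hn
    · simpa using mul_le_mul_of_nonneg_right hC (ns_nonneg f)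
    · have hpow : lam ^ n ≤ lam := pow_le_of_le_one hlam.1.le hlam.2.le hn.ne'
      calc ns ((L₁ ^ n) f) ≤ A * lam ^ n * ns f + B * nw f := hLY L₁ (Or.inl rfl) n hn f
        _ ≤ A * lam * ns f + B * ns f :=
          add_le_add
            (mul_le_mul_of_nonneg_right (mul_le_mul_of_nonneg_left hpow hA) (ns_nonneg f))
            (mul_le_mul_of_nonneg_left (hwle f) hB)
        _ = (A * lam + B) * ns f := by ring
  have hd : h₁ - h₂ = L₁ (h₁ - h₂) + (L₁ - L₂) h₂ := by
    rw [map_sub, LinearMap.sub_apply, hh₁, hh₂]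
    abel
  -- The estimate also holds for `N = 0`, where the induction starts.
  clear hN
  induction N with
  | zero => simp
  | succ n ih =>
    have hstep : (L₁ ^ n) (h₁ - h₂)
        = (L₁ ^ (n + 1)) (h₁ - h₂) + (L₁ ^ n) ((L₁ - L₂) h₂) := by
      rw [pow_succ, Module.End.mul_apply, ← map_add, ← hd]
    have htri := hns_add ((L₁ ^ (n + 1)) (h₁ - h₂)) ((L₁ ^ n) ((L₁ - L₂) h₂))
    rw [← hstep] at htri
    have hb := hbound n ((L₁ - L₂) h₂)
    push_cast
    linarith
end

section
/- Let X be a real vector space equipped with a norm ‖·‖_s and a seminorm ‖·‖_w satisfying ‖f‖_w ≤ ‖f‖_s for all f ∈ X. Let L₁, L₂ : X → X be linear maps and suppose there are constants A, B ≥ 0 and λ ∈ (0,1) with Aλ + B ≥ 1 such that for i = 1, 2, all n ≥ 1 and all f ∈ X one has ‖L_iⁿ f‖_s ≤ A λⁿ ‖f‖_s + B ‖f‖_w. Set C* = Aλ + B. Let h₁, h₂ ∈ X satisfy L₁h₁ = h₁ and L₂h₂ = h₂, and let I : X → ℝ be a linear functional with I(h₁) = I(h₂). If for some integer N ≥ 1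 there is a constant C_N < 1 such that ‖L₁^N f‖_s ≤ C_N ‖f‖_s for every f ∈ X with I(f) = 0, then ‖h₁ − h₂‖_s ≤ N · C* · ‖(L₁ − L₂) h₂‖_s / (1 − C_N). -/
/-!
Write `h₁ - h₂ = L₁^N (h₁ - h₂) + (L₁^N h₂ - h₂)`. The first term is at most
`C_N * ‖h₁ - h₂‖_s` because `I (h₁ - h₂) = 0`, so it can be absorbed on the left. Since
`L₂ h₂ = h₂`, the second telescopes as `∑_{k < N} L₁^k ((L₁ - L₂) h₂)`, and every power of
`L₁` is bounded by `A * lam + B` in the strong norm by the Lasota–Yorke inequality.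
-/

/-- Lemma 3.2 (second part): if moreover `L₁^N` contracts the subspace
`U⁰ = {f : I f = 0}` with rate `C_N < 1` and the fixed points have equal `I`-value,
then `‖h₁ - h₂‖_s ≤ N · C* · ‖(L₁ - L₂) h₂‖_s / (1 - C_N)`. -/
theorem stmt1 {X : Type*} [AddCommGroup X] [Module ℝ X]
    (ns nw : X → ℝ)
    (hns_eq_zero : ∀ f : X, ns f = 0 ↔ f = 0)
    (hns_add : ∀ f g : X, ns (f + g) ≤ ns f + ns g)
    (hns_smul : ∀ (c : ℝ) (f : X), ns (c • f) = |c| * ns f)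
    (hnw_add : ∀ f g : X, nw (f + g) ≤ nw f + nw g)
    (hnw_smul : ∀ (c : ℝ) (f : X), nw (c • f) = |c| * nw f)
    (hwle : ∀ f : X, nw f ≤ ns f)
    (L₁ L₂ : X →ₗ[ℝ] X)
    (A B lam : ℝ) (hA : 0 ≤ A) (hB : 0 ≤ B) (hlam : lam ∈ Set.Ioo (0:ℝ) 1)
    (hC : 1 ≤ A * lam + B)
    (hLY : ∀ L : X →ₗ[ℝ] X, L = L₁ ∨ L = L₂ → ∀ n : ℕ, 1 ≤ n → ∀ f : X,
      ns ((L ^ n) f) ≤ A * lam ^ n * ns f + B * nw f)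
    (h₁ h₂ : X) (hh₁ : L₁ h₁ = h₁) (hh₂ : L₂ h₂ = h₂)
    (I : X →ₗ[ℝ] ℝ) (hI : I h₁ = I h₂)
    (N : ℕ) (hN : 1 ≤ N) (C_N : ℝ) (hCN : C_N < 1)
    (hcontr : ∀ f : X, I f = 0 → ns ((L₁ ^ N) f) ≤ C_N * ns f) :
    ns (h₁ - h₂) ≤ N * (A * lam + B) * ns ((L₁ - L₂) h₂) / (1 - C_N) := by
  have hzero : ns 0 = 0 := (hns_eq_zero 0).2 rfl
  have hnonneg : ∀ f, 0 ≤ ns f := by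
    intro f
    have h := hns_add f ((-1 : ℝ) • f)
    rw [hns_smul] at h
    simp only [neg_smul, one_smul, add_neg_cancel, hzero, abs_neg, abs_one, one_mul] at h
    linarith
  have hpow : ∀ (n : ℕ) (f : X), ns ((L₁ ^ n) f) ≤ (A * lam + B) * ns f := by
    intro n f
    rcases Nat.eq_zero_or_pos n with rfl | hn
    -- The inequality for `n = 0` is where `1 ≤ A * lam + B` enters.
    · simpa using le_mul_of_one_le_left (hnonneg f) hC
    · have hl : lam ^ n ≤ lam := pow_le_of_le_one hlam.1.le hlam.2.le (by omega)
      calc ns ((L₁ ^ n) f) ≤ A * lam ^ n * ns f + B * nw f := hLY L₁ (Or.inl rfl) n hn f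
        _ ≤ A * lam * ns f + B * ns f := by
          have := hnonneg f
          have := hwle f
          gcongr
        _ = (A * lam + B) * ns f := by ring
  have htel : ∀ n : ℕ,
      ns ((L₁ ^ n) h₂ - h₂) ≤ n * (A * lam + B) * ns ((L₁ - L₂) h₂) := by
    intro n
    induction n with
    | zero => simp [hzero]
    | succ n ih =>
      have e : (L₁ ^ (n + 1)) h₂ - h₂
          = (L₁ ^ n) ((L₁ - L₂) h₂) + ((L₁ ^ n) h₂ - h₂) := by
        rw [pow_succ, Module.End.mul_apply, LinearMap.sub_apply, hh₂, map_sub]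
        abel
      rw [e]
      have h := hns_add ((L₁ ^ n) ((L₁ - L₂) h₂)) ((L₁ ^ n) h₂ - h₂)
      have h' := hpow n ((L₁ - L₂) h₂)
      push_cast
      linarith
  have hfix : (L₁ ^ N) h₁ = h₁ := by
    rw [Module.End.pow_apply]
    exact Function.iterate_fixed hh₁ N
  have e : h₁ - h₂ = (L₁ ^ N) (h₁ - h₂) + ((L₁ ^ N) h₂ - h₂) := by
    rw [map_sub, hfix]
    abel
  have h := hns_add ((L₁ ^ N) (h₁ - h₂)) ((L₁ ^ N) h₂ - h₂)
  rw [← e] at h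
  have hc := hcontr (h₁ - h₂) (by rw [map_sub, hI, sub_self])
  rw [le_div_iff₀ (by linarith)]
  linarith [htel N]
end

section
/- Let Δ = [1/2,1], γ ∈ (0,1), and let (g_ω)_{ω∈Ω} be a countable family of C¹ maps g_ω : [0,1] → Δ with g_ω' > 0 and Σ_ω ‖g_ω'‖_B < ∞. Then for all continuous Φ, Ψ : Δ → ℝ, ‖F₀Φ − F₀Ψ‖_{L¹([0,1])} ≤ ‖Φ − Ψ‖_{L¹(Δ)} + (1/(2^{1−γ}(1−γ))) · ‖Φ − Ψ‖_∞ · Σ_{ω∈Ω} ‖g_ω'‖_B. -/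
/-!
On `Δ = [1/2,1]` the two functions are `Φ` and `Ψ` themselves, which gives the first term. For
`x ∈ (0,1/2)` the definition of `normB` gives `g' ω x ≤ x^(-γ) * normB γ (g' ω)`
(`le_rpow_mul_normB`), so both series converge absolutely and their difference is at most
`‖Φ - Ψ‖_∞ * x^(-γ) * ∑ normB γ (g' ω)`. The function `x^(-γ)` is integrable on `(0,1/2)`, with
integral `1 / (2^(1-γ) * (1-γ))`. The left-hand integrand is only dominated, so its measurability
plays no role.
-/

open Set MeasureTheory

/-- `‖u‖_B = sup_{x ∈ (0,1]} x^γ |u(x)|`. -/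
noncomputable def normB (γ : ℝ) (u : ℝ → ℝ) : ℝ :=
  sSup ((fun x => x ^ γ * |u x|) '' Ioc (0:ℝ) 1)

/-- Continuity on the closed interval makes the supremum in `normB` finite, so that it really
bounds `u` pointwise. -/
theorem le_rpow_mul_normB {γ : ℝ} (hγ : 0 < γ) {u : ℝ → ℝ}
    (hu : ContinuousOn u (Icc (0:ℝ) 1)) {x : ℝ} (hx : x ∈ Ioc (0:ℝ) 1) :
    |u x| ≤ x ^ (-γ) * normB γ u := by
  have hbdd : BddAbove ((fun x => x ^ γ * |u x|) '' Ioc (0:ℝ) 1) := by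
    obtain ⟨C, hC⟩ := isCompact_Icc.exists_bound_of_continuousOn hu
    refine ⟨C, ?_⟩
    rintro _ ⟨y, hy, rfl⟩
    calc y ^ γ * |u y| ≤ 1 * |u y| := by
          gcongr
          exact Real.rpow_le_one hy.1.le hy.2 hγ.le
      _ ≤ C := by simpa using hC y ⟨hy.1.le, hy.2⟩
  have h : x ^ γ * |u x| ≤ normB γ u := le_csSup hbdd ⟨x, hx, rfl⟩
  have hpos : 0 < x ^ γ := Real.rpow_pos_of_pos hx.1 γ
  rw [Real.rpow_neg hx.1.le, inv_mul_eq_div, le_div_iff₀ hpos]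
  linarith

theorem integral_rpow_neg_half {γ : ℝ} (hγ : γ < 1) :
    ∫ x in Ioc (0:ℝ) (1/2), x ^ (-γ) = 1 / (2 ^ (1 - γ) * (1 - γ)) := by
  rw [← intervalIntegral.integral_of_le (by norm_num), integral_rpow (Or.inl (by linarith)),
    Real.zero_rpow (by linarith), one_div (2:ℝ), Real.inv_rpow (by norm_num),
    show -γ + 1 = 1 - γ by ring, sub_zero, one_div, mul_inv, div_eq_mul_inv]

theorem integrableOn_rpow_neg_half {γ : ℝ} (hγ : γ < 1) :
    IntegrableOn (fun x : ℝ => x ^ (-γ)) (Ioc (0:ℝ) (1/2)) :=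
  (intervalIntegrable_iff_integrableOn_Ioc_of_le (by norm_num)).1
    (intervalIntegral.intervalIntegrable_rpow' (by linarith))

/-- Estimate (I) from the proof of the main theorem: for the pull-back operator
`F₀Φ = 1_Δ Φ + 1_{Δᶜ} Σ_ω Φ∘g_ω · g_ω'` on `[0,1]` (with `Δ = [1/2,1]`),
`‖F₀Φ − F₀Ψ‖₁ ≤ ‖Φ − Ψ‖_{L¹(Δ)} + (2^{1-γ}(1-γ))⁻¹ ‖Φ − Ψ‖_∞ Σ_ω ‖g_ω'‖_B`. -/
theorem stmt9 {Ω : Type*} [Countable Ω]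
    (γ : ℝ) (hγ : γ ∈ Ioo (0:ℝ) 1)
    (g g' : Ω → ℝ → ℝ)
    (hgC1 : ∀ ω, ∀ x ∈ Icc (0:ℝ) 1, HasDerivWithinAt (g ω) (g' ω x) (Icc (0:ℝ) 1) x)
    (hg'cont : ∀ ω, ContinuousOn (g' ω) (Icc (0:ℝ) 1))
    (hg'pos : ∀ ω, ∀ x ∈ Icc (0:ℝ) 1, 0 < g' ω x)
    (hmaps : ∀ ω, MapsTo (g ω) (Icc (0:ℝ) 1) (Icc (1/2:ℝ) 1))
    (hsum : Summable fun ω => normB γ (g' ω))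
    (Φ Ψ : ℝ → ℝ)
    (hΦ : ContinuousOn Φ (Icc (1/2:ℝ) 1)) (hΨ : ContinuousOn Ψ (Icc (1/2:ℝ) 1)) :
    (∫ x in Icc (0:ℝ) 1,
        |(if x ∈ Icc (1/2:ℝ) 1 then Φ x else ∑' ω, Φ (g ω x) * g' ω x) -
          (if x ∈ Icc (1/2:ℝ) 1 then Ψ x else ∑' ω, Ψ (g ω x) * g' ω x)|) ≤
      (∫ x in Icc (1/2:ℝ) 1, |Φ x - Ψ x|) +
        (1 / (2 ^ (1 - γ) * (1 - γ))) *
          sSup ((fun x => |Φ x - Ψ x|) '' Icc (1/2:ℝ) 1) *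
          ∑' ω, normB γ (g' ω) := by
  obtain ⟨hγ0, hγ1⟩ := hγ
  set M := sSup ((fun x => |Φ x - Ψ x|) '' Icc (1/2:ℝ) 1) with hM
  set S := ∑' ω, normB γ (g' ω) with hS
  have hdiff : ContinuousOn (fun x => |Φ x - Ψ x|) (Icc (1/2:ℝ) 1) := (hΦ.sub hΨ).abs
  have hle : ∀ y ∈ Icc (1/2:ℝ) 1, |Φ y - Ψ y| ≤ M := fun y hy =>
    le_csSup (isCompact_Icc.bddAbove_image hdiff) ⟨y, hy, rfl⟩
  -- Absolute convergence of each series defining the operator off `Δ`, with an explicit bound.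
  have key : ∀ (f : ℝ → ℝ) (C : ℝ), (∀ y ∈ Icc (1/2:ℝ) 1, |f y| ≤ C) → ∀ x ∈ Ioc (0:ℝ) 1,
      Summable (fun ω => f (g ω x) * g' ω x) ∧
        |∑' ω, f (g ω x) * g' ω x| ≤ C * S * x ^ (-γ) := by
    intro f C hf x hx
    have hx' : x ∈ Icc (0:ℝ) 1 := ⟨hx.1.le, hx.2⟩
    have hterm : ∀ ω, ‖f (g ω x) * g' ω x‖ ≤ C * x ^ (-γ) * normB γ (g' ω) := by
      intro ω
      have hfC := hf _ (hmaps ω hx')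
      rw [Real.norm_eq_abs, abs_mul, mul_assoc]
      exact mul_le_mul hfC (le_rpow_mul_normB hγ0 (hg'cont ω) hx) (abs_nonneg _)
        ((abs_nonneg _).trans hfC)
    have hs : HasSum (fun ω => C * x ^ (-γ) * normB γ (g' ω)) (C * x ^ (-γ) * S) :=
      hsum.hasSum.mul_left _
    refine ⟨Summable.of_norm_bounded hs.summable hterm, ?_⟩
    have := tsum_of_norm_bounded hs hterm
    rw [Real.norm_eq_abs] at this
    linarith
  obtain ⟨CΦ, hCΦ⟩ := isCompact_Icc.exists_bound_of_continuousOn hΦ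
  obtain ⟨CΨ, hCΨ⟩ := isCompact_Icc.exists_bound_of_continuousOn hΨ
  have hoff : ∀ x ∈ Ioc (0:ℝ) 1,
      |(∑' ω, Φ (g ω x) * g' ω x) - ∑' ω, Ψ (g ω x) * g' ω x| ≤ M * S * x ^ (-γ) := by
    intro x hx
    rw [← (key Φ CΦ hCΦ x hx).1.tsum_sub (key Ψ CΨ hCΨ x hx).1]
    simpa only [sub_mul] using (key (fun y => Φ y - Ψ y) M hle x hx).2
  have hint₁ : Integrable ((Icc (1/2:ℝ) 1).indicator fun x => |Φ x - Ψ x|) :=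
    (hdiff.integrableOn_compact isCompact_Icc).integrable_indicator measurableSet_Icc
  have hint₂ : Integrable ((Ioc (0:ℝ) (1/2)).indicator fun x => M * S * x ^ (-γ)) :=
    IntegrableOn.integrable_indicator ((integrableOn_rpow_neg_half hγ1).const_mul (M * S))
      measurableSet_Ioc
  -- Passing to `Ioc 0 1` discards the point `0`, where no bound by `normB` is available.
  rw [integral_Icc_eq_integral_Ioc]
  calc _ ≤ ∫ x in Ioc (0:ℝ) 1, ((Icc (1/2:ℝ) 1).indicator (fun x => |Φ x - Ψ x|) x +
          (Ioc (0:ℝ) (1/2)).indicator (fun x => M * S * x ^ (-γ)) x) := by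
        refine integral_mono_of_nonneg (Filter.Eventually.of_forall fun x => abs_nonneg _)
          (hint₁.add hint₂).integrableOn ?_
        filter_upwards [ae_restrict_mem measurableSet_Ioc] with x hx
        by_cases hxΔ : x ∈ Icc (1/2:ℝ) 1
        · have hnn : 0 ≤ (Ioc (0:ℝ) (1/2)).indicator (fun x => M * S * x ^ (-γ)) x :=
            indicator_nonneg (fun y hy =>
              (abs_nonneg _).trans (hoff y ⟨hy.1, hy.2.trans (by norm_num)⟩)) x
          simp only [if_pos hxΔ, indicator_of_mem hxΔ]
          linarith
        · have hx2 : x ∈ Ioc (0:ℝ) (1/2) :=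
            ⟨hx.1, le_of_lt (not_le.1 fun h => hxΔ ⟨h, hx.2⟩)⟩
          simp only [if_neg hxΔ, indicator_of_notMem hxΔ, indicator_of_mem hx2, zero_add]
          exact hoff x hx
    _ = (∫ x in Icc (1/2:ℝ) 1, |Φ x - Ψ x|) + ∫ x in Ioc (0:ℝ) (1/2), M * S * x ^ (-γ) := by
        have hsub : Icc (1/2:ℝ) 1 ⊆ Ioc 0 1 := fun x hx => ⟨by linarith [hx.1], hx.2⟩
        rw [integral_add hint₁.integrableOn hint₂.integrableOn,
          setIntegral_indicator measurableSet_Icc, setIntegral_indicator measurableSet_Ioc,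
          inter_eq_right.2 hsub,
          inter_eq_right.2 (Ioc_subset_Ioc_right (by norm_num))]
    _ = _ := by
        rw [integral_const_mul, integral_rpow_neg_half hγ1]
        ring
end

section
/- Let Δ = [1/2,1], γ ∈ (0,1), and let (g_ω)_{ω∈Ω} be a countable family of injective C¹ maps g_ω : [0,1] → Δ with g_ω' > 0 such that the sets g_ω([0,1/2]) are pairwise disjoint subsets of Δ, and let a_ω, b_ω : [0,1] → ℝ be continuous with sup_ω ‖a_ω‖_∞ < ∞ and Σ_ω ‖b_ω‖_B < ∞. Then for all Φ, Ψ ∈ C¹(Δ), ‖QΦ − QΨ‖_{L¹([0,1/2])} ≤ max{ sup_ω ‖a_ω‖_∞ , (1/(2^{1−γ}(1−γ))) Σ_{ω∈Ω} ‖b_ω‖_B } · ‖Φ − Ψ‖_{C¹}. -/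
/-!
The difference of the two series is, almost everywhere, a single series in `Φ - Ψ` and `Φ' - Ψ'`.
Bounding those by their sup norms `D₀`, `D₁`, and using `|b_ω(x)| ≤ ‖b_ω‖_B x^{-γ}`, the integrand is
at most `A D₁ Σ_ω g_ω'(x) + D₀ (Σ_ω ‖b_ω‖_B) x^{-γ}` with `A = sup_ω ‖a_ω‖_∞`. By the change of
variables `y = g_ω(x)`, `∫_0^{1/2} Σ_ω g_ω'` is the total length of the disjoint sets
`g_ω([0,1/2]) ⊆ [1/2,1]`, hence at most `1/2` (`lintegral_tsum_deriv_le`). The same bound shows that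
`Σ_ω g_ω'(x)` converges for almost every `x`, so that both series converge absolutely there and may
be subtracted term by term.
-/

open Set MeasureTheory

lemma abs_le_sSup_image {f : ℝ → ℝ} {p q : ℝ} (hf : ContinuousOn f (Icc p q)) {x : ℝ}
    (hx : x ∈ Icc p q) : |f x| ≤ sSup ((fun x => |f x|) '' Icc p q) :=
  le_csSup (isCompact_Icc.bddAbove_image hf.abs) (mem_image_of_mem _ hx)

lemma sSup_abs_image_nonneg (f : ℝ → ℝ) (s : Set ℝ) : 0 ≤ sSup ((fun x => |f x|) '' s) := by
  apply Real.sSup_nonneg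
  rintro _ ⟨x, _, rfl⟩
  exact abs_nonneg _

lemma normB_nonneg (γ : ℝ) (u : ℝ → ℝ) : 0 ≤ normB γ u := by
  apply Real.sSup_nonneg
  rintro _ ⟨x, hx, rfl⟩
  exact mul_nonneg (Real.rpow_nonneg hx.1.le _) (abs_nonneg _)

lemma abs_le_normB_mul_rpow {γ : ℝ} (hγ : 0 ≤ γ) {u : ℝ → ℝ} (hu : ContinuousOn u (Icc (0:ℝ) 1))
    {x : ℝ} (hx : x ∈ Ioc (0:ℝ) 1) : |u x| ≤ normB γ u * x ^ (-γ) := by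
  have hb : BddAbove ((fun x => x ^ γ * |u x|) '' Ioc (0:ℝ) 1) := by
    refine ⟨sSup ((fun x => |u x|) '' Icc (0:ℝ) 1), ?_⟩
    rintro _ ⟨y, hy, rfl⟩
    calc y ^ γ * |u y| ≤ 1 * |u y| :=
          mul_le_mul_of_nonneg_right (Real.rpow_le_one hy.1.le hy.2 hγ) (abs_nonneg _)
      _ ≤ _ := by rw [one_mul]; exact abs_le_sSup_image hu (Ioc_subset_Icc_self hy)
  have h : x ^ γ * |u x| ≤ normB γ u := le_csSup hb (mem_image_of_mem _ hx)
  have hp : 0 < x ^ γ := Real.rpow_pos_of_pos hx.1 γ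
  rw [Real.rpow_neg hx.1.le, ← div_eq_mul_inv, le_div_iff₀ hp]
  linarith

/-- The branches have disjoint images in an interval of length `1/2`, so their derivatives have
total integral at most `1/2`. -/
lemma lintegral_tsum_deriv_le {Ω : Type*} [Countable Ω] (g g' : Ω → ℝ → ℝ)
    (hgC1 : ∀ ω, ∀ x ∈ Icc (0:ℝ) 1, HasDerivWithinAt (g ω) (g' ω x) (Icc (0:ℝ) 1) x)
    (hg'cont : ∀ ω, ContinuousOn (g' ω) (Icc (0:ℝ) 1))
    (hg'pos : ∀ ω, ∀ x ∈ Icc (0:ℝ) 1, 0 < g' ω x)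
    (hginj : ∀ ω, InjOn (g ω) (Icc (0:ℝ) 1))
    (hmaps : ∀ ω, MapsTo (g ω) (Icc (0:ℝ) 1) (Icc (1/2:ℝ) 1))
    (hdisj : Pairwise fun ω₁ ω₂ =>
      Disjoint (g ω₁ '' Icc (0:ℝ) (1/2)) (g ω₂ '' Icc (0:ℝ) (1/2))) :
    ∫⁻ x in Icc (0:ℝ) (1/2), ∑' ω, ENNReal.ofReal (g' ω x) ≤ ENNReal.ofReal (1/2) := by
  have hsub : Icc (0:ℝ) (1/2) ⊆ Icc 0 1 := Icc_subset_Icc_right (by norm_num)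
  rw [lintegral_tsum fun ω =>
    (((hg'cont ω).mono hsub).aemeasurable measurableSet_Icc).ennreal_ofReal]
  have himg : ∀ ω, ∫⁻ x in Icc (0:ℝ) (1/2), ENNReal.ofReal (g' ω x)
      = volume (g ω '' Icc (0:ℝ) (1/2)) := by
    intro ω
    have h := lintegral_image_eq_lintegral_abs_deriv_mul measurableSet_Icc
      (fun x hx => (hgC1 ω x (hsub hx)).mono hsub) ((hginj ω).mono hsub) (fun _ => 1)
    rw [setLIntegral_one] at h
    rw [h]
    refine setLIntegral_congr_fun measurableSet_Icc fun x hx => ?_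
    simp only [mul_one, abs_of_pos (hg'pos ω x (hsub hx))]
  simp_rw [himg]
  rw [← measure_iUnion hdisj]
  · calc volume (⋃ ω, g ω '' Icc (0:ℝ) (1/2)) ≤ volume (Icc (1/2:ℝ) 1) :=
          measure_mono (iUnion_subset fun ω => ((hmaps ω).mono_left hsub).image_subset)
      _ = ENNReal.ofReal (1/2) := by rw [Real.volume_Icc]; norm_num
  · intro ω
    refine IsCompact.measurableSet (isCompact_Icc.image_of_continuousOn ?_)
    exact fun x hx => ((hgC1 ω x (hsub hx)).continuousWithinAt).mono hsub

lemma integrableOn_rpow_neg {γ : ℝ} (hγ : γ < 1) :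
    IntegrableOn (fun x : ℝ => x ^ (-γ)) (Icc (0:ℝ) (1/2)) := by
  rw [integrableOn_Icc_iff_integrableOn_Ioc,
    ← intervalIntegrable_iff_integrableOn_Ioc_of_le (by norm_num)]
  exact intervalIntegral.intervalIntegrable_rpow' (by linarith)

lemma setIntegral_rpow_neg {γ : ℝ} (hγ : γ < 1) :
    ∫ x in Icc (0:ℝ) (1/2), x ^ (-γ) = 1 / (2 ^ (1 - γ) * (1 - γ)) := by
  rw [integral_Icc_eq_integral_Ioc, ← intervalIntegral.integral_of_le (by norm_num),
    integral_rpow (Or.inl (by linarith)), show -γ + 1 = 1 - γ by ring,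
    Real.zero_rpow (by linarith), sub_zero, one_div (2:ℝ), Real.inv_rpow (by norm_num)]
  have : (2:ℝ) ^ (1 - γ) ≠ 0 := (Real.rpow_pos_of_pos (by norm_num) _).ne'
  have : 1 - γ ≠ 0 := by linarith
  field_simp

/-- Estimate (III) from the proof of the main theorem: for the operator
`QΦ(x) = Σ_ω [Φ'(g_ω(x)) a_ω(x) g_ω'(x) + Φ(g_ω(x)) b_ω(x)]` on `[0,1/2)`,
`‖QΦ − QΨ‖_{L¹([0,1/2])} ≤ max{sup_ω ‖a_ω‖_∞, (2^{1-γ}(1-γ))⁻¹ Σ_ω ‖b_ω‖_B} ‖Φ−Ψ‖_{C¹}`. -/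
theorem stmt11 {Ω : Type*} [Countable Ω]
    (γ : ℝ) (hγ : γ ∈ Ioo (0:ℝ) 1)
    (g g' : Ω → ℝ → ℝ)
    (hgC1 : ∀ ω, ∀ x ∈ Icc (0:ℝ) 1, HasDerivWithinAt (g ω) (g' ω x) (Icc (0:ℝ) 1) x)
    (hg'cont : ∀ ω, ContinuousOn (g' ω) (Icc (0:ℝ) 1))
    (hg'pos : ∀ ω, ∀ x ∈ Icc (0:ℝ) 1, 0 < g' ω x)
    (hginj : ∀ ω, InjOn (g ω) (Icc (0:ℝ) 1))
    (hmaps : ∀ ω, MapsTo (g ω) (Icc (0:ℝ) 1) (Icc (1/2:ℝ) 1))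
    (hdisj : Pairwise fun ω₁ ω₂ =>
      Disjoint (g ω₁ '' Icc (0:ℝ) (1/2)) (g ω₂ '' Icc (0:ℝ) (1/2)))
    (a b : Ω → ℝ → ℝ)
    (ha_cont : ∀ ω, ContinuousOn (a ω) (Icc (0:ℝ) 1))
    (hb_cont : ∀ ω, ContinuousOn (b ω) (Icc (0:ℝ) 1))
    (ha_bdd : BddAbove (Set.range fun ω => sSup ((fun x => |a ω x|) '' Icc (0:ℝ) 1)))
    (hb_sum : Summable fun ω => normB γ (b ω))
    (Φ Φ' Ψ Ψ' : ℝ → ℝ)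
    (hΦ : ∀ x ∈ Icc (1/2:ℝ) 1, HasDerivWithinAt Φ (Φ' x) (Icc (1/2:ℝ) 1) x)
    (hΨ : ∀ x ∈ Icc (1/2:ℝ) 1, HasDerivWithinAt Ψ (Ψ' x) (Icc (1/2:ℝ) 1) x)
    (hΦ'c : ContinuousOn Φ' (Icc (1/2:ℝ) 1))
    (hΨ'c : ContinuousOn Ψ' (Icc (1/2:ℝ) 1)) :
    (∫ x in Icc (0:ℝ) (1/2),
        |(∑' ω, (Φ' (g ω x) * a ω x * g' ω x + Φ (g ω x) * b ω x)) -
          (∑' ω, (Ψ' (g ω x) * a ω x * g' ω x + Ψ (g ω x) * b ω x))|) ≤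
      max (⨆ ω, sSup ((fun x => |a ω x|) '' Icc (0:ℝ) 1))
          ((1 / (2 ^ (1 - γ) * (1 - γ))) * ∑' ω, normB γ (b ω)) *
        (sSup ((fun x => |Φ x - Ψ x|) '' Icc (1/2:ℝ) 1) +
          sSup ((fun x => |Φ' x - Ψ' x|) '' Icc (1/2:ℝ) 1)) := by
  have hsub : Icc (0:ℝ) (1/2) ⊆ Icc 0 1 := Icc_subset_Icc_right (by norm_num)
  have hΦc : ContinuousOn Φ (Icc (1/2:ℝ) 1) := fun x hx => (hΦ x hx).continuousWithinAt
  have hΨc : ContinuousOn Ψ (Icc (1/2:ℝ) 1) := fun x hx => (hΨ x hx).continuousWithinAt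
  set A := ⨆ ω, sSup ((fun x => |a ω x|) '' Icc (0:ℝ) 1) with hA
  set S := ∑' ω, normB γ (b ω) with hS
  set D₀ := sSup ((fun x => |Φ x - Ψ x|) '' Icc (1/2:ℝ) 1) with hD₀
  set D₁ := sSup ((fun x => |Φ' x - Ψ' x|) '' Icc (1/2:ℝ) 1) with hD₁
  set c : ℝ := 1 / (2 ^ (1 - γ) * (1 - γ)) with hc
  have hA0 : 0 ≤ A := Real.iSup_nonneg fun ω => sSup_abs_image_nonneg _ _
  have hD₀0 : 0 ≤ D₀ := sSup_abs_image_nonneg (fun x => Φ x - Ψ x) _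
  have hD₁0 : 0 ≤ D₁ := sSup_abs_image_nonneg (fun x => Φ' x - Ψ' x) _
  have haA : ∀ ω, ∀ x ∈ Icc (0:ℝ) 1, |a ω x| ≤ A := fun ω x hx =>
    (abs_le_sSup_image (ha_cont ω) hx).trans (le_ciSup ha_bdd ω)
  -- Bound on a single term of the series attached to a pair `(F, F')`.
  have hterm : ∀ F F' : ℝ → ℝ, ContinuousOn F (Icc (1/2:ℝ) 1) → ContinuousOn F' (Icc (1/2:ℝ) 1) →
      ∀ ω, ∀ x ∈ Ioc (0:ℝ) (1/2), |F' (g ω x) * a ω x * g' ω x + F (g ω x) * b ω x| ≤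
        A * sSup ((fun x => |F' x|) '' Icc (1/2:ℝ) 1) * g' ω x +
          sSup ((fun x => |F x|) '' Icc (1/2:ℝ) 1) * x ^ (-γ) * normB γ (b ω) := by
    intro F F' hF hF' ω x hx
    have hx1 : x ∈ Icc (0:ℝ) 1 := hsub (Ioc_subset_Icc_self hx)
    have h1 := abs_le_sSup_image hF (hmaps ω hx1)
    have h2 := abs_le_sSup_image hF' (hmaps ω hx1)
    have h3 := abs_le_normB_mul_rpow hγ.1.le (hb_cont ω) (x := x) ⟨hx.1, hx1.2⟩
    have h4 := haA ω x hx1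
    have h5 := hg'pos ω x hx1
    have h6 := sSup_abs_image_nonneg F (Icc (1/2:ℝ) 1)
    have h7 := sSup_abs_image_nonneg F' (Icc (1/2:ℝ) 1)
    refine (abs_add_le _ _).trans (add_le_add ?_ ?_)
    · rw [abs_mul, abs_mul, abs_of_pos h5, mul_comm |F' _|]
      gcongr
    · rw [abs_mul, mul_assoc, mul_comm (x ^ (-γ))]
      gcongr
  have hL := lintegral_tsum_deriv_le g g' hgC1 hg'cont hg'pos hginj hmaps hdisj
  have hLtop : ∫⁻ x in Icc (0:ℝ) (1/2), ∑' ω, ENNReal.ofReal (g' ω x) ≠ ⊤ :=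
    (hL.trans_lt ENNReal.ofReal_lt_top).ne
  have hmeas : AEMeasurable (fun x => ∑' ω, ENNReal.ofReal (g' ω x))
      (volume.restrict (Icc (0:ℝ) (1/2))) := AEMeasurable.tsum fun ω =>
    (((hg'cont ω).mono hsub).aemeasurable measurableSet_Icc).ennreal_ofReal
  have hfin := ae_lt_top' hmeas hLtop
  set G : ℝ → ℝ := fun x => (∑' ω, ENNReal.ofReal (g' ω x)).toReal with hG
  have hGint : IntegrableOn G (Icc (0:ℝ) (1/2)) := integrable_toReal_of_lintegral_ne_top hmeas hLtop
  have hGle : ∫ x in Icc (0:ℝ) (1/2), G x ≤ 1/2 := by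
    rw [hG, integral_toReal hmeas hfin]
    exact ENNReal.toReal_le_of_le_ofReal (by norm_num) hL
  have hxint := integrableOn_rpow_neg hγ.2
  have hne : ∀ᵐ x ∂(volume.restrict (Icc (0:ℝ) (1/2))), x ≠ 0 :=
    Measure.ae_ne _ 0
  calc _ ≤ ∫ x in Icc (0:ℝ) (1/2), (A * D₁ * G x + D₀ * S * x ^ (-γ)) := by
        refine integral_mono_of_nonneg (Filter.Eventually.of_forall fun x => abs_nonneg _)
          ((hGint.const_mul _).add (hxint.const_mul _)) ?_
        filter_upwards [hfin, hne, ae_restrict_mem measurableSet_Icc] with x hxf hx0 hxI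
        have hx : x ∈ Ioc (0:ℝ) (1/2) := ⟨lt_of_le_of_ne hxI.1 (Ne.symm hx0), hxI.2⟩
        have hg0 : ∀ ω, (ENNReal.ofReal (g' ω x)).toReal = g' ω x := fun ω =>
          ENNReal.toReal_ofReal (hg'pos ω x (hsub hxI)).le
        have hgs : Summable fun ω => g' ω x := by
          simpa only [hg0] using ENNReal.summable_toReal hxf.ne
        have hGx : G x = ∑' ω, g' ω x := by
          simp only [hG]
          rw [ENNReal.tsum_toReal_eq fun ω => ENNReal.ofReal_ne_top]
          simp only [hg0]
        have hmaj : ∀ p q : ℝ, Summable fun ω => p * g' ω x + q * normB γ (b ω) := fun p q =>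
          (hgs.mul_left p).add (hb_sum.mul_left q)
        have hsΦ : Summable fun ω => Φ' (g ω x) * a ω x * g' ω x + Φ (g ω x) * b ω x :=
          Summable.of_norm_bounded (hmaj _ _) fun ω => hterm Φ Φ' hΦc hΦ'c ω x hx
        have hsΨ : Summable fun ω => Ψ' (g ω x) * a ω x * g' ω x + Ψ (g ω x) * b ω x :=
          Summable.of_norm_bounded (hmaj _ _) fun ω => hterm Ψ Ψ' hΨc hΨ'c ω x hx
        have hbd := hterm (fun y => Φ y - Ψ y) (fun y => Φ' y - Ψ' y) (hΦc.sub hΨc)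
          (hΦ'c.sub hΨ'c)
        have hle : ‖∑' ω, ((Φ' (g ω x) - Ψ' (g ω x)) * a ω x * g' ω x
            + (Φ (g ω x) - Ψ (g ω x)) * b ω x)‖ ≤ _ :=
          tsum_of_norm_bounded (hmaj (A * D₁) (D₀ * x ^ (-γ))).hasSum fun ω => hbd ω x hx
        rw [Real.norm_eq_abs, (hgs.mul_left _).tsum_add (hb_sum.mul_left _), tsum_mul_left,
          tsum_mul_left, ← hGx] at hle
        rw [← hsΦ.tsum_sub hsΨ]
        calc _ = |∑' ω, ((Φ' (g ω x) - Ψ' (g ω x)) * a ω x * g' ω x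
              + (Φ (g ω x) - Ψ (g ω x)) * b ω x)| :=
              congrArg abs (tsum_congr fun ω => by ring)
          _ ≤ _ := hle
          _ = _ := by rw [← hS]; ring
    _ = A * D₁ * (∫ x in Icc (0:ℝ) (1/2), G x) + D₀ * S * c := by
        rw [integral_add (hGint.const_mul _) (hxint.const_mul _), integral_const_mul,
          integral_const_mul, setIntegral_rpow_neg hγ.2]
    _ ≤ A * D₁ * 1 + D₀ * S * c := by
        gcongr
        linarith
    _ = c * S * D₀ + A * D₁ := by ring
    _ ≤ max A (c * S) * D₀ + max A (c * S) * D₁ := by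
        gcongr
        · exact le_max_right _ _
        · exact le_max_left _ _
    _ = _ := by ring
end

section
/- Let α ∈ (0,1) and γ ∈ (0,1) (so in particular 0 < γ < 1 + α). Then for every real z > 0 and every real n ≥ 1: z^γ (1 + n z^α α 2^α)^{−(1/α + 1)} ≤ C_sum · n^{−γ/α}, where C_sum = ((1+α−γ)/γ)^{(1+α−γ)/α} · (α 2^α)^{−γ/α} / ((1+α−γ)/γ + 1)^{1/α + 1}. -/
/-!
Put `p = γ/α`, `q = (1+α-γ)/α`, so that `p + q = 1/α + 1` and `q/p = (1+α-γ)/γ`. In the scale-free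
variable `t = n z^α α 2^α` one has `z^γ = t^p (α 2^α)^{-p} n^{-p}`, and the claim becomes
`t^p (1+t)^{-(p+q)} ≤ (q/p)^q / (q/p+1)^{p+q}`. This is the weighted AM-GM inequality with weights
`p/(p+q)`, `q/(p+q)`, applied to `t (p+q)/p` and `(p+q)/q` (whose weighted mean is `t + 1`), raised
to the power `p + q` (`rpow_mul_le_one_add_rpow`).
-/

/-- Equality holds at `t = p/q`, so this is the sharp bound on `t^p / (1+t)^(p+q)`. -/
lemma rpow_mul_le_one_add_rpow {p q t : ℝ} (hp : 0 < p) (hq : 0 < q) (ht : 0 < t) :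
    t ^ p * (q / p + 1) ^ (p + q) ≤ (q / p) ^ q * (1 + t) ^ (p + q) := by
  have hs : 0 < p + q := by positivity
  have amgm := Real.geom_mean_le_arith_mean2_weighted (w₁ := p / (p + q)) (w₂ := q / (p + q))
    (p₁ := t * (q / p + 1)) (p₂ := (q / p + 1) / (q / p))
    (by positivity) (by positivity) (by positivity) (by positivity) (by field_simp)
  have mean : p / (p + q) * (t * (q / p + 1)) + q / (p + q) * ((q / p + 1) / (q / p)) = 1 + t := by
    field_simp
    ring
  rw [mean] at amgm
  have key := Real.rpow_le_rpow (by positivity) amgm hs.le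
  rw [Real.mul_rpow (by positivity) (by positivity), ← Real.rpow_mul (by positivity),
    ← Real.rpow_mul (by positivity), div_mul_cancel₀ _ hs.ne', div_mul_cancel₀ _ hs.ne',
    Real.mul_rpow (by positivity) (by positivity),
    Real.div_rpow (by positivity) (by positivity)] at key
  have hr : 0 < (q / p) ^ q := by positivity
  rw [Real.rpow_add (by positivity) p q]
  calc t ^ p * ((q / p + 1) ^ p * (q / p + 1) ^ q)
      = (q / p) ^ q * (t ^ p * (q / p + 1) ^ p * ((q / p + 1) ^ q / (q / p) ^ q)) := by
        field_simp
    _ ≤ _ := mul_le_mul_of_nonneg_left key hr.le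

/-- The pointwise optimization from the Appendix: for `α, γ ∈ (0,1)`, all `z > 0` and
real `n ≥ 1`, `z^γ (1 + n z^α α 2^α)^{-(1/α+1)} ≤ C_sum · n^{-γ/α}`, with
`C_sum = ((1+α-γ)/γ)^{(1+α-γ)/α} (α 2^α)^{-γ/α} / ((1+α-γ)/γ + 1)^{1/α+1}`. -/
theorem stmt13 (α γ : ℝ) (hα : α ∈ Set.Ioo (0:ℝ) 1) (hγ : γ ∈ Set.Ioo (0:ℝ) 1)
    (z n : ℝ) (hz : 0 < z) (hn : 1 ≤ n) :
    z ^ γ * (1 + n * z ^ α * α * 2 ^ α) ^ (-(1 / α + 1)) ≤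
      (((1 + α - γ) / γ) ^ ((1 + α - γ) / α) * (α * 2 ^ α) ^ (-(γ / α)) /
          ((1 + α - γ) / γ + 1) ^ (1 / α + 1)) *
        n ^ (-(γ / α)) := by
  obtain ⟨hα0, -⟩ := hα
  obtain ⟨hγ0, hγ1⟩ := hγ
  have hn0 : 0 < n := by linarith
  have hδ : 0 < 1 + α - γ := by linarith
  have hc : 0 < α * (2:ℝ) ^ α := by positivity
  have key := rpow_mul_le_one_add_rpow (p := γ / α) (q := (1 + α - γ) / α)
    (t := n * z ^ α * (α * 2 ^ α)) (by positivity) (by positivity) (by positivity)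
  have hsum : γ / α + (1 + α - γ) / α = 1 / α + 1 := by
    field_simp
    ring
  have hratio : (1 + α - γ) / α / (γ / α) = (1 + α - γ) / γ := by field_simp
  have hzpow : (z ^ α) ^ (γ / α) = z ^ γ := by
    rw [← Real.rpow_mul hz.le, mul_div_cancel₀ _ hα0.ne']
  rw [hsum, hratio, Real.mul_rpow (by positivity) hc.le, Real.mul_rpow hn0.le (by positivity),
    hzpow] at key
  rw [mul_assoc (n * z ^ α) α, Real.rpow_neg (by positivity), Real.rpow_neg hc.le,
    Real.rpow_neg hn0.le]
  have hA : 0 < (1 + n * z ^ α * (α * 2 ^ α)) ^ (1 / α + 1) := by positivity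
  have hB : 0 < ((1 + α - γ) / γ + 1) ^ (1 / α + 1) := by positivity
  have hC : 0 < (α * (2:ℝ) ^ α) ^ (γ / α) := by positivity
  have hN : 0 < n ^ (γ / α) := by positivity
  generalize (1 + n * z ^ α * (α * 2 ^ α)) ^ (1 / α + 1) = A at *
  generalize ((1 + α - γ) / γ + 1) ^ (1 / α + 1) = B at *
  generalize (α * (2:ℝ) ^ α) ^ (γ / α) = C at *
  generalize n ^ (γ / α) = N at *
  generalize ((1 + α - γ) / γ) ^ ((1 + α - γ) / α) = R at *
  have hrhs : R * C⁻¹ / B * N⁻¹ = R / (C * B * N) := by field_simp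
  rw [hrhs, ← div_eq_mul_inv, div_le_div_iff₀ hA (by positivity)]
  linarith
end

section
/- Fix α ∈ (0,1) and z₀ ∈ (0,1/2], and let (z_n) be the backward orbit of z₀ under the left branch T₀(x) = x(1 + 2^α x^α) of the LSV map, i.e. z_n ∈ (0,1/2] with z_{n+1}(1 + 2^α z_{n+1}^α) = z_n for all n ≥ 0. Then for every n ≥ 1: z₀^α / (n(1 + α 2^α)) ≤ z_n^α ≤ 1 / (z₀^{−α} + n α(1−α) 2^{α−1}). In particular z_n^α ≤ C₂/n with C₂ = 1/(α(1−α)2^{α−1}) and z_n^α ≥ C₁ z₀^α/n with C₁ = 1/(1 + α 2^α). -/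
/-!
In the coordinate `u = x ^ (-α)` the left branch is almost a translation. With `y = 2^α x^α ∈ (0, 1]`,
one backward step increases `u` by `x ^ (-α) * (1 - (1 + y) ^ (-α))`. Bernoulli's inequality gives
`α * y / 2 ≤ 1 - (1 + y) ^ (-α) ≤ α * y`, and `x ^ (-α) * y = 2 ^ α`, so the increment lies between
`α * 2 ^ (α - 1)` and `α * 2 ^ α` (`lsv_step`). Summing over `n` steps and inverting gives both
bounds; the lower one also uses `1 ≤ u 0` to absorb the additive constant.
-/

/-- Bernoulli's inequality applied to `1 / (1 + y) = 1 - y / (1 + y)` for the upper bound, and to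
`1 + y` for the lower bound. -/
lemma one_add_rpow_neg_bounds {α y : ℝ} (h0 : 0 < α) (h1 : α < 1) (hy : 0 < y) (hy1 : y ≤ 1) :
    1 - α * y ≤ (1 + y) ^ (-α) ∧ (1 + y) ^ (-α) ≤ 1 - α * y / 2 := by
  have hp : 0 < 1 + y := by linarith
  constructor
  · have hb : (1 + y) ^ α ≤ 1 + α * y :=
      rpow_one_add_le_one_add_mul_self (by linarith) h0.le h1.le
    have hq : 0 < (1 + y) ^ α := Real.rpow_pos_of_pos hp α
    have hay : 0 < α * y := mul_pos h0 hy
    rw [Real.rpow_neg hp.le, ← one_div, le_div_iff₀ hq]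
    by_cases h : 0 ≤ 1 - α * y
    · nlinarith [mul_le_mul_of_nonneg_left hb h]
    · nlinarith
  · have hb : (1 + -(y / (1 + y))) ^ α ≤ 1 + α * -(y / (1 + y)) := by
      refine rpow_one_add_le_one_add_mul_self ?_ h0.le h1.le
      have : y / (1 + y) ≤ 1 := by rw [div_le_one hp]; linarith
      linarith
    have he : 1 + -(y / (1 + y)) = (1 + y)⁻¹ := by field_simp; ring
    rw [he, Real.inv_rpow hp.le, ← Real.rpow_neg hp.le] at hb
    have hh : y / 2 ≤ y / (1 + y) := by gcongr; linarith
    nlinarith [mul_le_mul_of_nonneg_left hh h0.le]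

lemma lsv_step {α x : ℝ} (h0 : 0 < α) (h1 : α < 1) (hx : 0 < x) (hx1 : x ≤ 1 / 2) :
    (x * (1 + 2 ^ α * x ^ α)) ^ (-α) + α * 2 ^ (α - 1) ≤ x ^ (-α) ∧
      x ^ (-α) ≤ (x * (1 + 2 ^ α * x ^ α)) ^ (-α) + α * 2 ^ α := by
  have hw : 0 < x ^ α := Real.rpow_pos_of_pos hx α
  have ht : (0:ℝ) < 2 ^ α := Real.rpow_pos_of_pos two_pos α
  have hy1 : (2:ℝ) ^ α * x ^ α ≤ 1 := by
    rw [← Real.mul_rpow two_pos.le hx.le]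
    exact Real.rpow_le_one (by positivity) (by linarith) h0.le
  obtain ⟨ha, hb⟩ := one_add_rpow_neg_bounds h0 h1 (mul_pos ht hw) hy1
  have hu : 0 < x ^ (-α) := Real.rpow_pos_of_pos hx _
  have huw : x ^ (-α) * x ^ α = 1 := by rw [← Real.rpow_add hx]; simp
  have hy : x ^ (-α) * (2 ^ α * x ^ α) = 2 ^ α := by linear_combination 2 ^ α * huw
  rw [Real.mul_rpow hx.le (by positivity), Real.rpow_sub_one two_ne_zero]
  have ha' := mul_le_mul_of_nonneg_left ha hu.le
  have hb' := mul_le_mul_of_nonneg_left hb hu.le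
  have e1 : x ^ (-α) * (1 - α * (2 ^ α * x ^ α)) = x ^ (-α) - α * 2 ^ α := by
    linear_combination (-α) * hy
  have e2 : x ^ (-α) * (1 - α * (2 ^ α * x ^ α) / 2) = x ^ (-α) - α * (2 ^ α / 2) := by
    linear_combination (-α / 2) * hy
  constructor <;> linarith

/-- Effective two-sided bounds for the backward orbit `(z_n)` of `z₀ ∈ (0,1/2]` under the
left branch `T₀(x) = x(1 + 2^α x^α)` of the LSV map:
`z₀^α/(n(1+α2^α)) ≤ z_n^α ≤ 1/(z₀^{-α} + n α(1-α)2^{α-1})`; in particular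
`z_n^α ≤ C₂/n` with `C₂ = 1/(α(1-α)2^{α-1})` and `z_n^α ≥ C₁ z₀^α/n` with
`C₁ = 1/(1+α2^α)`. -/
theorem stmt14 (α : ℝ) (hα : α ∈ Set.Ioo (0:ℝ) 1)
    (z : ℕ → ℝ) (hz0 : z 0 ∈ Set.Ioc (0:ℝ) (1/2))
    (hmem : ∀ n, z n ∈ Set.Ioc (0:ℝ) (1/2))
    (hrec : ∀ n, z (n + 1) * (1 + 2 ^ α * z (n + 1) ^ α) = z n)
    (n : ℕ) (hn : 1 ≤ n) :
    z 0 ^ α / (n * (1 + α * 2 ^ α)) ≤ z n ^ α ∧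
      z n ^ α ≤ 1 / (z 0 ^ (-α) + n * (α * (1 - α) * 2 ^ (α - 1))) ∧
      z n ^ α ≤ (1 / (α * (1 - α) * 2 ^ (α - 1))) / n ∧
      (1 / (1 + α * 2 ^ α)) * z 0 ^ α / n ≤ z n ^ α := by
  obtain ⟨h0, h1⟩ := hα
  have hlin : ∀ m : ℕ, z 0 ^ (-α) + m * (α * 2 ^ (α - 1)) ≤ z m ^ (-α) ∧
      z m ^ (-α) ≤ z 0 ^ (-α) + m * (α * 2 ^ α) := by
    intro m
    induction m with
    | zero => simp
    | succ k ih =>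
      have h := lsv_step h0 h1 (hmem (k + 1)).1 (hmem (k + 1)).2
      rw [hrec k] at h
      push_cast
      constructor <;> linarith [ih.1, ih.2, h.1, h.2]
  obtain ⟨hlo, hup⟩ := hlin n
  have hn1 : (1:ℝ) ≤ n := by exact_mod_cast hn
  have hn0 : (0:ℝ) < n := by linarith
  have ht : (0:ℝ) < 2 ^ α := Real.rpow_pos_of_pos two_pos α
  have hs : (0:ℝ) < 2 ^ (α - 1) := Real.rpow_pos_of_pos two_pos _
  have hw0 : 0 < z 0 ^ α := Real.rpow_pos_of_pos hz0.1 α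
  have hw : 0 < z n ^ α := Real.rpow_pos_of_pos (hmem n).1 α
  have hw01 : z 0 ^ α ≤ 1 := Real.rpow_le_one hz0.1.le (by linarith [hz0.2]) h0.le
  rw [Real.rpow_neg hz0.1.le, Real.rpow_neg (hmem n).1.le] at hlo hup
  have hc : 0 < α * (1 - α) * 2 ^ (α - 1) := mul_pos (mul_pos h0 (by linarith)) hs
  have hu0 : 1 ≤ (z 0 ^ α)⁻¹ := (one_le_inv₀ hw0).2 hw01
  have hlower : z 0 ^ α / (n * (1 + α * 2 ^ α)) ≤ z n ^ α := by
    have hat : 0 < α * 2 ^ α := mul_pos h0 ht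
    have hbig : (z n ^ α)⁻¹ ≤ (z 0 ^ α)⁻¹ * (n * (1 + α * 2 ^ α)) := by
      have e1 : (z 0 ^ α)⁻¹ ≤ (z 0 ^ α)⁻¹ * n := le_mul_of_one_le_right (by positivity) hn1
      have e2 : n * (α * 2 ^ α) ≤ (z 0 ^ α)⁻¹ * (n * (α * 2 ^ α)) :=
        le_mul_of_one_le_left (by positivity) hu0
      linarith
    have := inv_anti₀ (inv_pos.2 hw) hbig
    rwa [inv_inv, mul_inv, inv_inv, ← div_eq_mul_inv] at this
  -- The increment `α * 2 ^ (α - 1)` exceeds the claimed rate, which carries an extra factor `1 - α`.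
  have hrate : (z 0 ^ α)⁻¹ + n * (α * (1 - α) * 2 ^ (α - 1)) ≤ (z n ^ α)⁻¹ := by
    have : α * (1 - α) * 2 ^ (α - 1) ≤ α * 2 ^ (α - 1) := by nlinarith [mul_pos (mul_pos h0 h0) hs]
    linarith [mul_le_mul_of_nonneg_left this hn0.le]
  refine ⟨hlower, ?_, ?_, ?_⟩
  · rw [Real.rpow_neg hz0.1.le, one_div]
    have := inv_anti₀ (by positivity) hrate
    rwa [inv_inv] at this
  · have h := inv_anti₀ (mul_pos hn0 hc)
      ((le_add_of_nonneg_left (by positivity)).trans hrate)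
    rw [inv_inv] at h
    rwa [div_div, one_div, mul_comm _ (n : ℝ)]
  · convert hlower using 1
    rw [one_div_mul_eq_div, div_div, mul_comm (n : ℝ)]
end
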